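/- Let K be a symmetric convex body in ℝ^n and let K_t, t in an interval I, be an SRS-movement of K. Then for every real p ≥ 1 and every integer N ≥ n, the function t ↦ 𝔼 V_{K_t, N}^p is convex on I. -/

import Mathlib

open MeasureTheory Set
open scoped RealInnerProductSpace

noncomputable section

variable {E : Type*} [NormedAddCommGroup E] [InnerProductSpace ℝ E]

/-- Orthogonal projection `π_v` onto the hyperplane `v^⊥`. -/
def projPerp (v x : E) : E := x - (⟪x, v⟫ / ⟪v, v⟫) • v

/-- The family of sets `K_t = { x + t β(π_v(x)) v : x ∈ K }` underlying an RS-movement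
with direction `v` and speed function `β`. -/
def RSFamily (K : Set E) (v : E) (β : E → ℝ) (t : ℝ) : Set E :=
  (fun x => x + (t * β (projPerp v x)) • v) '' K

/-- A symmetric convex body `K` is SRS-decomposable if there are `ε > 0`, a direction
`v ≠ 0` and a speed function `β` which is odd on `π_v(K)` and is not the restriction of a
linear functional, such that `K_t` is convex for every `t ∈ (-ε, ε)`
(note `K_0 = K` automatically). -/
def IsSRSDecomposable (K : Set E) : Prop :=
  ∃ (v : E) (β : E → ℝ) (ε : ℝ), 0 < ε ∧ v ≠ 0 ∧
    (∀ x ∈ projPerp v '' K, β (-x) = -β x) ∧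
    (∀ t ∈ Set.Ioo (-ε) ε, Convex ℝ (RSFamily K v β t)) ∧
    ¬∃ ℓ : E →ₗ[ℝ] ℝ, ∀ x ∈ projPerp v '' K, β x = ℓ x

/-- A symmetric convex body: a compact convex set with nonempty interior with `K = -K`. -/
def IsSymConvexBody (K : Set E) : Prop :=
  IsCompact K ∧ Convex ℝ K ∧ (interior K).Nonempty ∧ K = -K

/-- `momentU n N K p = 𝔼 U_{K,N}^p`, the `p`-th moment of the normalized volume of the
convex hull of `N` independent uniform random points in `K ⊆ ℝⁿ`. -/
def momentU (n N : ℕ) (K : Set (EuclideanSpace ℝ (Fin n))) (p : ℝ) : ℝ :=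
  (∫ x : Fin N → EuclideanSpace ℝ (Fin n) in {x | ∀ i, x i ∈ K},
      ((volume (convexHull ℝ (Set.range x))).toReal / (volume K).toReal) ^ p) /
    (volume K).toReal ^ N

/-- `momentV n N K p = 𝔼 V_{K,N}^p`, the `p`-th moment of the normalized volume of the
symmetric convex hull `conv{±x₁, …, ±x_N}` of `N` independent uniform random points
in `K ⊆ ℝⁿ`. -/
def momentV (n N : ℕ) (K : Set (EuclideanSpace ℝ (Fin n))) (p : ℝ) : ℝ :=
  (∫ x : Fin N → EuclideanSpace ℝ (Fin n) in {x | ∀ i, x i ∈ K},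
      ((volume (convexHull ℝ (Set.range x ∪ -Set.range x))).toReal / (volume K).toReal) ^ p) /
    (volume K).toReal ^ N

/-!
Apply the shear `y ↦ y + t β(π_v y) v` to each random point. It preserves Lebesgue measure and maps
`K` onto `K_t`, so `𝔼 V_{K_t, N}^p` is an integral over the fixed domain `K^N` and it suffices to
show convexity in `t` of the volume of `conv {±(yᵢ + t bᵢ v)}` for fixed `yᵢ` and `bᵢ`. This
polytope is the image of the fixed polytope `conv {±(yᵢ, bᵢ)} ⊆ ℝⁿ × ℝ` under
`(x, r) ↦ x + t r v`. On each line of direction `v` it therefore cuts out the image of a fixed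
planar convex set under `(s, r) ↦ s + t r`, a segment whose length is convex in `t`, and Fubini sums
the lengths up.

The shear need not be measurable as it stands. However, convexity of `K` and of one `K_t` with
`t ≠ 0` exhibits `t β ∘ π_v` as a difference of two convex functions, the lower envelopes of the two
bodies. Hence `β ∘ π_v` is bounded on `K`, continuous away from a null set, and may be replaced by a
bounded measurable function.
-/

open scoped ENNReal Pointwise

section ConvexFunctions

variable {F : Type*} [NormedAddCommGroup F] [NormedSpace ℝ F]

lemma exists_pos_forall_sub_smul_mem {P U : Set F} {z₀ : F} (hP : Bornology.IsBounded P)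
    (hU : U ∈ nhds z₀) : ∃ ε : ℝ, 0 < ε ∧ ∀ z ∈ P, z₀ - ε • (z - z₀) ∈ U := by
  obtain ⟨r, hr, hball⟩ := Metric.mem_nhds_iff.1 hU
  obtain ⟨R, hR, hPR⟩ := hP.subset_closedBall_lt 0 z₀
  refine ⟨r / (2 * R), by positivity, fun z hz => hball ?_⟩
  rw [mem_ball_iff_norm, sub_sub_cancel_left, norm_neg, norm_smul,
    Real.norm_of_nonneg (by positivity)]
  calc r / (2 * R) * ‖z - z₀‖ ≤ r / (2 * R) * R := by
        gcongr; exact mem_closedBall_iff_norm.1 (hPR hz)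
    _ = r / 2 := by field_simp
    _ < r := half_lt_self hr

lemma one_add_mul_le_of_convexOn {P : Set F} {h : F → ℝ} (hh : ConvexOn ℝ P h) {ε : ℝ}
    (hε : 0 < ε) {z z₀ : F} (hz : z ∈ P) (hw : z₀ - ε • (z - z₀) ∈ P) :
    (1 + ε) * h z₀ ≤ ε * h z + h (z₀ - ε • (z - z₀)) := by
  have hcomb : (ε / (1 + ε)) • z + (1 / (1 + ε)) • (z₀ - ε • (z - z₀)) = z₀ := by
    match_scalars <;> field_simp <;> ring
  have hconv := hh.2 hz hw (by positivity : 0 ≤ ε / (1 + ε)) (by positivity : 0 ≤ 1 / (1 + ε))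
    (by field_simp; ring)
  rw [hcomb, smul_eq_mul, smul_eq_mul] at hconv
  calc (1 + ε) * h z₀
      ≤ (1 + ε) * (ε / (1 + ε) * h z + 1 / (1 + ε) * h (z₀ - ε • (z - z₀))) := by gcongr
    _ = ε * h z + h (z₀ - ε • (z - z₀)) := by field_simp

-- A value of `h` far below `h z₀` would, by reflection through `z₀`, force a large value near `z₀`.
lemma bddBelow_image_of_convexOn [FiniteDimensional ℝ F] {P : Set F} (hP : Bornology.IsBounded P)
    (hPi : (interior P).Nonempty) {h : F → ℝ} (hh : ConvexOn ℝ P h) : BddBelow (h '' P) := by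
  obtain ⟨z₀, hz₀⟩ := hPi
  have hcont : ContinuousAt h z₀ :=
    hh.continuousOn_interior.continuousAt (isOpen_interior.mem_nhds hz₀)
  have hnhds : {w | h w < h z₀ + 1 ∧ w ∈ P} ∈ nhds z₀ :=
    (hcont.eventually_lt_const (lt_add_one _)).and (mem_interior_iff_mem_nhds.1 hz₀)
  obtain ⟨ε, hε, hrefl⟩ := exists_pos_forall_sub_smul_mem hP hnhds
  refine ⟨((1 + ε) * h z₀ - (h z₀ + 1)) / ε, ?_⟩
  rintro _ ⟨z, hz, rfl⟩
  obtain ⟨hlt, hmem⟩ := hrefl z hz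
  have hconv := one_add_mul_le_of_convexOn hh hε hz hmem
  rw [div_le_iff₀ hε]
  linarith

lemma convexOn_of_subsingleton {V : Type*} [AddCommMonoid V] [Module ℝ V] {s : Set V}
    (hs : s.Subsingleton) (f : V → ℝ) : ConvexOn ℝ s f := by
  refine ⟨hs.convex, fun x hx y hy a b _ _ hab => ?_⟩
  rw [hs hy hx, ← add_smul, ← add_smul, hab, one_smul, one_smul]

lemma convexOn_div_rpow {V : Type*} [AddCommMonoid V] [SMul ℝ V] {s : Set V} {f : V → ℝ}
    (hf : ConvexOn ℝ s f) (hf₀ : ∀ x ∈ s, 0 ≤ f x) {k p : ℝ} (hk : 0 ≤ k) (hp : 1 ≤ p) :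
    ConvexOn ℝ s fun x => (f x / k) ^ p := by
  refine ⟨hf.1, fun x hx y hy a b ha hb hab => ?_⟩
  have hxy := hf.1 hx hy ha hb hab
  calc (f (a • x + b • y) / k) ^ p
      ≤ (a • (f x / k) + b • (f y / k)) ^ p := by
        refine Real.rpow_le_rpow (div_nonneg (hf₀ _ hxy) hk) ?_ (by linarith)
        calc f (a • x + b • y) / k ≤ (a • f x + b • f y) / k := by
              gcongr; exact hf.2 hx hy ha hb hab
          _ = a • (f x / k) + b • (f y / k) := by simp only [smul_eq_mul]; ring
    _ ≤ a • (f x / k) ^ p + b • (f y / k) ^ p :=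
        (convexOn_rpow hp).2 (div_nonneg (hf₀ x hx) hk) (div_nonneg (hf₀ y hy) hk) ha hb hab

lemma convexOn_integral {α V : Type*} [MeasurableSpace α] {μ : Measure α} [AddCommMonoid V]
    [SMul ℝ V] {s : Set V} (hs : Convex ℝ s) {f : V → α → ℝ}
    (hf : ∀ a, ConvexOn ℝ s fun t => f t a) (hint : ∀ t ∈ s, Integrable (f t) μ) :
    ConvexOn ℝ s fun t => ∫ a, f t a ∂μ := by
  refine ⟨hs, fun t ht u hu a b ha hb hab => ?_⟩
  have hit : Integrable (fun ω => a • f t ω) μ := (hint t ht).smul a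
  have hiu : Integrable (fun ω => b • f u ω) μ := (hint u hu).smul b
  calc ∫ ω, f (a • t + b • u) ω ∂μ ≤ ∫ ω, a • f t ω + b • f u ω ∂μ :=
        integral_mono (hint _ (hs ht hu ha hb hab)) (hit.add hiu)
          fun ω => (hf ω).2 ht hu ha hb hab
    _ = a • ∫ ω, f t ω ∂μ + b • ∫ ω, f u ω ∂μ := by
        rw [← integral_smul, ← integral_smul, ← integral_add hit hiu]

end ConvexFunctions

section SymmetricHull

variable {ι F : Type*}

/-- The symmetric polytope `conv {±xᵢ}` spanned by a family of points. -/
def symmHull [AddCommGroup F] [Module ℝ F] (x : ι → F) : Set F :=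
  convexHull ℝ (range x ∪ -range x)

lemma symmHull_eq_convexHull_range [AddCommGroup F] [Module ℝ F] (x : ι → F) :
    symmHull x = convexHull ℝ (range (Sum.elim x fun i => -x i)) := by
  rw [symmHull, Sum.elim_range, ← image_neg_eq_neg, ← range_comp]
  rfl

lemma image_symmHull {G : Type*} [AddCommGroup F] [Module ℝ F] [AddCommGroup G] [Module ℝ G]
    (f : F →ₗ[ℝ] G) (x : ι → F) : f '' symmHull x = symmHull (f ∘ x) := by
  rw [symmHull, symmHull, f.image_convexHull, image_union, image_neg, range_comp]

lemma convexHull_range_eq_image_stdSimplex [Fintype ι] [AddCommGroup F] [Module ℝ F] (x : ι → F) :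
    convexHull ℝ (range x) = (fun w : ι → ℝ => ∑ i, w i • x i) '' stdSimplex ℝ ι := by
  classical
  have hlin : (fun w : ι → ℝ => ∑ i, w i • x i) = Fintype.linearCombination ℝ x := by
    ext w; simp [Fintype.linearCombination_apply]
  rw [hlin, ← convexHull_rangle_single_eq_stdSimplex, LinearMap.image_convexHull, ← range_comp]
  congr 2
  ext i
  simp

variable [NormedAddCommGroup F] [NormedSpace ℝ F]

lemma symmHull_subset_closedBall {x : ι → F} {r : ℝ} (hx : ∀ i, ‖x i‖ ≤ r) :
    symmHull x ⊆ Metric.closedBall 0 r := by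
  refine convexHull_min (union_subset ?_ ?_) (convex_closedBall 0 r)
  · rintro _ ⟨i, rfl⟩
    simpa using hx i
  · rintro z ⟨i, hi⟩
    simpa [hi] using hx i

lemma isCompact_symmHull [Finite ι] (x : ι → F) : IsCompact (symmHull x) :=
  ((finite_range x).union (finite_range x).neg).isCompact_convexHull (𝕜 := ℝ)

lemma isClosed_setOf_mem_convexHull_range [Finite ι] :
    IsClosed {q : (ι → F) × F | q.2 ∈ convexHull ℝ (range q.1)} := by
  cases nonempty_fintype ι
  have hclosed :
      IsClosed {q : stdSimplex ℝ ι × ((ι → F) × F) | ∑ i, q.1.1 i • q.2.1 i = q.2.2} := by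
    have hcoord (i : ι) : Continuous fun q : stdSimplex ℝ ι × ((ι → F) × F) => q.1.1 i :=
      (continuous_apply i).comp (continuous_subtype_val.comp continuous_fst)
    exact isClosed_eq (continuous_finsetSum _ fun i _ => (hcoord i).smul (by fun_prop))
      (by fun_prop)
  have : CompactSpace (stdSimplex ℝ ι) := isCompact_iff_compactSpace.1 (isCompact_stdSimplex ℝ ι)
  convert isClosedMap_snd_of_compactSpace _ hclosed using 1
  ext ⟨x, z⟩
  simp [convexHull_range_eq_image_stdSimplex]

variable [MeasurableSpace F] [BorelSpace F] [SecondCountableTopology F]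

lemma measurable_measure_convexHull_range [Finite ι] (ν : Measure F) [SFinite ν] :
    Measurable fun x : ι → F => ν (convexHull ℝ (range x)) :=
  measurable_measure_prodMk_left isClosed_setOf_mem_convexHull_range.measurableSet

lemma measurable_measure_symmHull [Finite ι] (ν : Measure F) [SFinite ν] :
    Measurable fun x : ι → F => ν (symmHull x) := by
  simp only [symmHull_eq_convexHull_range]
  refine (measurable_measure_convexHull_range ν).comp (measurable_pi_iff.2 ?_)
  rintro (i | i)
  · exact measurable_pi_apply i
  · exact (measurable_pi_apply i).neg

end SymmetricHull

section LineFibers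

variable {F : Type*}

/-- The parameters `s` at which the line `s ↦ x + s • v` lies in `S`. -/
def lineFiber [AddCommGroup F] [Module ℝ F] (v : F) (S : Set F) (x : F) : Set ℝ :=
  {s | x + s • v ∈ S}

section Measure

variable [NormedAddCommGroup F] [NormedSpace ℝ F] [MeasurableSpace F] [BorelSpace F]
  [SecondCountableTopology F] {v : F} {S : Set F}

lemma measurableSet_setOf_add_smul_mem (v : F) (hS : MeasurableSet S) :
    MeasurableSet {q : F × ℝ | q.1 + q.2 • v ∈ S} :=
  (by fun_prop : Measurable fun q : F × ℝ => q.1 + q.2 • v) hS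

lemma measurable_volume_lineFiber (v : F) (hS : MeasurableSet S) :
    Measurable fun x => volume (lineFiber v S x) :=
  measurable_measure_prodMk_left (measurableSet_setOf_add_smul_mem v hS)

-- The slab `0 ≤ ℓ < 1` meets every line of direction `v` in a unit segment; translating by `s • v`
-- inside the product `F × ℝ` moves the slab condition from the base point to the parameter.
lemma measure_eq_setLIntegral_volume_lineFiber (ν : Measure F) [SFinite ν] [ν.IsAddRightInvariant]
    {ℓ : F →L[ℝ] ℝ} (hℓ : ℓ v = 1) (hS : MeasurableSet S) :
    ν S = ∫⁻ x in ℓ ⁻¹' Ico 0 1, volume (lineFiber v S x) ∂ν := by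
  have hslab : Measurable fun q : F × ℝ => ℓ q.1 - q.2 := by fun_prop
  have hunit (x : F) : volume {s : ℝ | ℓ x - s ∈ Ico 0 1} = 1 := by
    have hIoc : {s : ℝ | ℓ x - s ∈ Ico 0 1} = Ioc (ℓ x - 1) (ℓ x) := by
      simp [Set.ext_iff, sub_lt_comm, and_comm]
    rw [hIoc, Real.volume_Ioc, sub_sub_cancel, ENNReal.ofReal_one]
  have htranslate (s : ℝ) : ν.restrict S {x | ℓ x - s ∈ Ico 0 1} =
      ν.restrict (ℓ ⁻¹' Ico 0 1) {x | x + s • v ∈ S} := by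
    rw [Measure.restrict_apply' hS,
      Measure.restrict_apply' (ℓ.continuous.measurable measurableSet_Ico),
      ← measure_preimage_add_right ν (s • v), preimage_inter, inter_comm]
    congr 2
    ext x
    simp [hℓ]
  calc ν S = ∫⁻ x in S, volume {s : ℝ | ℓ x - s ∈ Ico 0 1} ∂ν := by
        simp only [hunit, setLIntegral_one]
    _ = ((ν.restrict S).prod volume) {q : F × ℝ | ℓ q.1 - q.2 ∈ Ico 0 1} :=
        (Measure.prod_apply (hslab measurableSet_Ico)).symm
    _ = ∫⁻ s : ℝ, ν.restrict S {x | ℓ x - s ∈ Ico 0 1} :=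
        Measure.prod_apply_symm (hslab measurableSet_Ico)
    _ = ∫⁻ s : ℝ, ν.restrict (ℓ ⁻¹' Ico 0 1) {x | x + s • v ∈ S} := by simp only [htranslate]
    _ = ((ν.restrict (ℓ ⁻¹' Ico 0 1)).prod volume) {q : F × ℝ | q.1 + q.2 • v ∈ S} :=
        (Measure.prod_apply_symm (measurableSet_setOf_add_smul_mem v hS)).symm
    _ = ∫⁻ x in ℓ ⁻¹' Ico 0 1, volume (lineFiber v S x) ∂ν :=
        Measure.prod_apply (measurableSet_setOf_add_smul_mem v hS)

end Measure

end LineFibers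

section ShadowSystems

lemma volume_add_le_of_isPreconnected {S T : Set ℝ} (hSc : IsCompact S) (hS : IsPreconnected S)
    (hTc : IsCompact T) (hT : IsPreconnected T) : volume (S + T) ≤ volume S + volume T := by
  rcases S.eq_empty_or_nonempty with rfl | hSne
  · simp
  rcases T.eq_empty_or_nonempty with rfl | hTne
  · simp
  have hSle := csInf_le_csSup hSne hSc.bddBelow hSc.bddAbove
  have hTle := csInf_le_csSup hTne hTc.bddBelow hTc.bddAbove
  rw [eq_Icc_of_connected_compact ⟨hSne, hS⟩ hSc, eq_Icc_of_connected_compact ⟨hTne, hT⟩ hTc]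
  calc volume (Icc (sInf S) (sSup S) + Icc (sInf T) (sSup T))
      ≤ volume (Icc (sInf S + sInf T) (sSup S + sSup T)) := measure_mono (Icc_add_Icc_subset ..)
    _ = volume (Icc (sInf S) (sSup S)) + volume (Icc (sInf T) (sSup T)) := by
        simp only [Real.volume_Icc]
        rw [← ENNReal.ofReal_add (sub_nonneg.2 hSle) (sub_nonneg.2 hTle)]
        ring_nf

lemma volume_image_combo_le {X : Type*} [TopologicalSpace X] {W : Set X} (hWc : IsCompact W)
    (hW : IsPreconnected W) {f g : X → ℝ} (hf : Continuous f) (hg : Continuous g)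
    {a b : ℝ} (ha : 0 ≤ a) (hb : 0 ≤ b) :
    volume ((fun w => a * f w + b * g w) '' W) ≤
      ENNReal.ofReal a * volume (f '' W) + ENNReal.ofReal b * volume (g '' W) := by
  have hscale (c : ℝ) (hc : 0 ≤ c) (h : X → ℝ) :
      volume ((fun w => c * h w) '' W) = ENNReal.ofReal c * volume (h '' W) := by
    have himage : (fun w => c * h w) '' W = c • (h '' W) := (image_image (c • ·) h W).symm
    simp [himage, Measure.addHaar_smul, abs_of_nonneg hc]
  have hsub : (fun w => a * f w + b * g w) '' W ⊆
      (fun w => a * f w) '' W + (fun w => b * g w) '' W := by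
    rintro _ ⟨w, hw, rfl⟩
    exact add_mem_add (mem_image_of_mem _ hw) (mem_image_of_mem _ hw)
  have hf' : Continuous fun w => a * f w := by fun_prop
  have hg' : Continuous fun w => b * g w := by fun_prop
  rw [← hscale a ha, ← hscale b hb]
  exact (measure_mono hsub).trans <| volume_add_le_of_isPreconnected
    (hWc.image hf') (hW.image _ hf'.continuousOn) (hWc.image hg') (hW.image _ hg'.continuousOn)

variable {F : Type*}

/-- The shadow system of `D ⊆ F × ℝ` in direction `v`: each point `x` of the base, at height `r`,
moves with velocity `r • v`. -/
def shadowSystem [AddCommGroup F] [Module ℝ F] (v : F) (D : Set (F × ℝ)) (t : ℝ) : Set F :=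
  (fun q : F × ℝ => q.1 + (t * q.2) • v) '' D

lemma lineFiber_shadowSystem [AddCommGroup F] [Module ℝ F] (v : F) (D : Set (F × ℝ)) (t : ℝ)
    (x : F) : lineFiber v (shadowSystem v D t) x =
      (fun q : ℝ × ℝ => q.1 + t * q.2) '' {q | (x + q.1 • v, q.2) ∈ D} := by
  ext s
  constructor
  · rintro ⟨⟨y, r⟩, hD, hy : y + (t * r) • v = x + s • v⟩
    have hbase : x + (s - t * r) • v = y := by
      rw [sub_smul, ← add_sub_assoc, ← hy, add_sub_cancel_right]
    refine ⟨(s - t * r, r), ?_, by ring⟩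
    simpa only [mem_ofPred_eq, hbase] using hD
  · rintro ⟨⟨q, r⟩, hD, rfl⟩
    refine ⟨(x + q • v, r), hD, ?_⟩
    simp only [add_smul, add_assoc]

lemma symmHull_add_smul_eq_shadowSystem [AddCommGroup F] [Module ℝ F] {ι : Type*} (v : F)
    (y : ι → F) (b : ι → ℝ) (t : ℝ) : symmHull (fun i => y i + (t * b i) • v) =
      shadowSystem v (symmHull fun i => (y i, b i)) t := by
  let f : F × ℝ →ₗ[ℝ] F :=
    LinearMap.fst ℝ F ℝ + t • (LinearMap.snd ℝ F ℝ).smulRight v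
  have hf : ⇑f = fun q : F × ℝ => q.1 + (t * q.2) • v := by ext q; simp [f, mul_smul]
  rw [shadowSystem, ← hf, image_symmHull, hf]
  rfl

variable [NormedAddCommGroup F] [NormedSpace ℝ F] {v : F} {D : Set (F × ℝ)}

lemma isCompact_shadowSystem (v : F) (hDc : IsCompact D) (t : ℝ) : IsCompact (shadowSystem v D t) :=
  hDc.image (by fun_prop)

lemma volume_lineFiber_shadowSystem_le (hv : v ≠ 0) (hDc : IsCompact D) (hD : Convex ℝ D) (x : F)
    {t u a b : ℝ} (ha : 0 ≤ a) (hb : 0 ≤ b) (hab : a + b = 1) :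
    volume (lineFiber v (shadowSystem v D (a * t + b * u)) x) ≤
      ENNReal.ofReal a * volume (lineFiber v (shadowSystem v D t) x) +
        ENNReal.ofReal b * volume (lineFiber v (shadowSystem v D u) x) := by
  set W : Set (ℝ × ℝ) := {q | (x + q.1 • v, q.2) ∈ D}
  have hemb : Topology.IsClosedEmbedding fun q : ℝ × ℝ => (x + q.1 • v, q.2) :=
    ((Homeomorph.addLeft x).isClosedEmbedding.comp (isClosedEmbedding_smul_left hv)).prodMap .id
  have hWc : IsCompact W := hemb.isCompact_preimage hDc
  have hWconv : Convex ℝ W := by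
    let f : ℝ × ℝ →ₗ[ℝ] F × ℝ := (LinearMap.toSpanSingleton ℝ F v).prodMap LinearMap.id
    have hW : W = f ⁻¹' ((fun q => (x, 0) + q) ⁻¹' D) := by ext q; simp [W, f]
    exact hW ▸ (hD.translate_preimage_right (x, 0)).linear_preimage f
  have hcombo : (fun q : ℝ × ℝ => q.1 + (a * t + b * u) * q.2) =
      fun q => a * (q.1 + t * q.2) + b * (q.1 + u * q.2) := by
    ext q
    linear_combination (-q.1) * hab
  simp only [lineFiber_shadowSystem, hcombo]
  exact volume_image_combo_le hWc hWconv.isPreconnected (by fun_prop) (by fun_prop) ha hb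

variable [MeasurableSpace F] [BorelSpace F] [SecondCountableTopology F]
  (ν : Measure F) [SFinite ν] [ν.IsAddRightInvariant]

lemma measure_shadowSystem_le (hv : v ≠ 0) (hDc : IsCompact D) (hD : Convex ℝ D)
    {t u a b : ℝ} (ha : 0 ≤ a) (hb : 0 ≤ b) (hab : a + b = 1) :
    ν (shadowSystem v D (a * t + b * u)) ≤
      ENNReal.ofReal a * ν (shadowSystem v D t) + ENNReal.ofReal b * ν (shadowSystem v D u) := by
  obtain ⟨ℓ, hℓ⟩ := SeparatingDual.exists_eq_one (R := ℝ) hv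
  have hS (t : ℝ) := (isCompact_shadowSystem v hDc t).measurableSet
  have hmeas (t : ℝ) := measurable_volume_lineFiber v (hS t)
  simp only [measure_eq_setLIntegral_volume_lineFiber ν hℓ (hS _)]
  rw [← lintegral_const_mul _ (hmeas t), ← lintegral_const_mul _ (hmeas u),
    ← lintegral_add_left ((hmeas t).const_mul _)]
  exact lintegral_mono fun x => volume_lineFiber_shadowSystem_le hv hDc hD x ha hb hab

lemma convexOn_measureReal_shadowSystem [IsFiniteMeasureOnCompacts ν] (hv : v ≠ 0)
    (hDc : IsCompact D) (hD : Convex ℝ D) :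
    ConvexOn ℝ univ fun t => ν.real (shadowSystem v D t) := by
  refine ⟨convex_univ, fun t _ u _ a b ha hb hab => ?_⟩
  have hfin (c t : ℝ) : ENNReal.ofReal c * ν (shadowSystem v D t) ≠ ∞ :=
    ENNReal.mul_ne_top ENNReal.ofReal_ne_top (isCompact_shadowSystem v hDc t).measure_ne_top
  have hle := ENNReal.toReal_mono (ENNReal.add_ne_top.2 ⟨hfin a t, hfin b u⟩)
    (measure_shadowSystem_le ν hv hDc hD ha hb hab)
  rwa [ENNReal.toReal_add (hfin a t) (hfin b u), ENNReal.toReal_mul, ENNReal.toReal_mul,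
    ENNReal.toReal_ofReal ha, ENNReal.toReal_ofReal hb] at hle

end ShadowSystems

section Cylinders

variable {F : Type*}

/-- The union of the lines of direction `v` that meet `S`, i.e. the preimage of the projection of
`S` along `v`. -/
def lineCylinder [AddCommGroup F] [Module ℝ F] (v : F) (S : Set F) : Set F :=
  {x | (lineFiber v S x).Nonempty}

/-- Functions constant on the lines of direction `v`, i.e. functions of the projection along `v`. -/
def IsLineInvariant {α : Type*} [AddCommGroup F] [Module ℝ F] (v : F) (B : F → α) : Prop :=
  ∀ (x : F) (s : ℝ), B (x + s • v) = B x

section Algebra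

variable [AddCommGroup F] [Module ℝ F] {v : F} {S : Set F}

lemma subset_lineCylinder (v : F) (S : Set F) : S ⊆ lineCylinder v S := fun x hx =>
  ⟨0, by simpa [lineFiber] using hx⟩

lemma isLineInvariant_mem_lineCylinder (v : F) (S : Set F) :
    IsLineInvariant v (· ∈ lineCylinder v S) := fun x r => propext
  ⟨fun ⟨s, hs⟩ => ⟨r + s, by simpa [lineFiber, add_smul, add_assoc] using hs⟩,
    fun ⟨s, hs⟩ => ⟨s - r, by simpa [lineFiber, add_assoc, ← add_smul] using hs⟩⟩

lemma isLineInvariant_neg_iff {α : Type*} {B : F → α} :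
    IsLineInvariant (-v) B ↔ IsLineInvariant v B := by
  refine ⟨fun hB x s => ?_, fun hB x s => ?_⟩
  · simpa using hB x (-s)
  · simpa using hB x (-s)

lemma add_smul_lineFiber_subset (hS : Convex ℝ S) {x y : F} {a b : ℝ} (ha : 0 ≤ a) (hb : 0 ≤ b)
    (hab : a + b = 1) :
    a • lineFiber v S x + b • lineFiber v S y ⊆ lineFiber v S (a • x + b • y) := by
  rintro _ ⟨_, ⟨s, hs, rfl⟩, _, ⟨r, hr, rfl⟩, rfl⟩
  have hcombo : a • x + b • y + (a • s + b • r) • v = a • (x + s • v) + b • (y + r • v) := by module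
  simpa only [lineFiber, mem_ofPred_eq, hcombo] using hS hs hr ha hb hab

lemma convex_lineCylinder (v : F) (hS : Convex ℝ S) : Convex ℝ (lineCylinder v S) :=
  fun _ hx _ hy _ _ ha hb hab =>
    (hx.smul_set.add hy.smul_set).mono (add_smul_lineFiber_subset hS ha hb hab)

lemma convexOn_sInf_lineFiber (hS : Convex ℝ S) (hbdd : ∀ x, BddBelow (lineFiber v S x)) :
    ConvexOn ℝ (lineCylinder v S) fun x => sInf (lineFiber v S x) := by
  refine ⟨convex_lineCylinder v hS, fun x hx y hy a b ha hb hab => ?_⟩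
  calc sInf (lineFiber v S (a • x + b • y))
      ≤ sInf (a • lineFiber v S x + b • lineFiber v S y) :=
        csInf_le_csInf (hbdd _) (hx.smul_set.add hy.smul_set)
          (add_smul_lineFiber_subset hS ha hb hab)
    _ = a • sInf (lineFiber v S x) + b • sInf (lineFiber v S y) := by
        rw [csInf_add hx.smul_set ((hbdd x).smul_of_nonneg ha) hy.smul_set
          ((hbdd y).smul_of_nonneg hb), Real.sInf_smul_of_nonneg ha, Real.sInf_smul_of_nonneg hb]

end Algebra

section Topology

variable [NormedAddCommGroup F] [NormedSpace ℝ F] {v : F} {S : Set F}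

lemma isBounded_lineFiber (hv : v ≠ 0) (hS : Bornology.IsBounded S) (x : F) :
    Bornology.IsBounded (lineFiber v S x) := by
  obtain ⟨R, hR⟩ := hS.exists_norm_le
  refine isBounded_iff_forall_norm_le.2 ⟨(R + ‖x‖) / ‖v‖, fun s hs => ?_⟩
  rw [le_div_iff₀ (norm_pos_iff.2 hv), ← norm_smul]
  calc ‖s • v‖ = ‖x + s • v - x‖ := by rw [add_sub_cancel_left]
    _ ≤ ‖x + s • v‖ + ‖x‖ := norm_sub_le _ _
    _ ≤ R + ‖x‖ := by gcongr; exact hR _ hs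

lemma isLineInvariant_mem_interior {U : Set F} (hU : IsLineInvariant v (· ∈ U)) :
    IsLineInvariant v (· ∈ interior U) := fun x s => by
  have hpre : (· + s • v) ⁻¹' U = U := ext fun y => (hU y s).to_iff
  have hint := (Homeomorph.addRight (s • v)).preimage_interior U
  rw [Homeomorph.coe_addRight, hpre] at hint
  exact congrArg (x ∈ ·) hint

end Topology

end Cylinders

section Shears

variable {F : Type*}

/-- The map moving every point `x` by `B x • v`. -/
def shear [AddCommGroup F] [Module ℝ F] (v : F) (B : F → ℝ) (x : F) : F := x + B x • v

section Algebra

variable [AddCommGroup F] [Module ℝ F] {v : F} {B : F → ℝ} {S : Set F}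

lemma shear_neg_neg (v : F) (B : F → ℝ) : shear (-v) (-B) = shear v B := by
  ext x; simp [shear]

lemma shear_neg_shear (hB : IsLineInvariant v B) (x : F) : shear v (-B) (shear v B x) = x := by
  simp [shear, hB x]

lemma IsLineInvariant.neg (hB : IsLineInvariant v B) : IsLineInvariant v (-B) :=
  fun x s => congrArg Neg.neg (hB x s)

lemma IsLineInvariant.smul (hB : IsLineInvariant v B) (t : ℝ) : IsLineInvariant v (t • B) :=
  fun x s => congrArg (t • ·) (hB x s)

lemma shear_shear_neg (hB : IsLineInvariant v B) (x : F) : shear v B (shear v (-B) x) = x := by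
  simpa using shear_neg_shear hB.neg x

lemma mem_image_shear_iff (hB : IsLineInvariant v B) {x : F} :
    x ∈ shear v B '' S ↔ shear v (-B) x ∈ S := by
  rw [image_eq_preimage_of_inverse (shear_neg_shear hB) (shear_shear_neg hB), mem_preimage]

lemma lineFiber_image_shear (hB : IsLineInvariant v B) (x : F) :
    lineFiber v (shear v B '' S) x = {B x} + lineFiber v S x := by
  ext s
  simp only [lineFiber, mem_ofPred_eq, mem_image_shear_iff hB, shear, Pi.neg_apply, hB x,
    singleton_add, image_add_left, mem_preimage, add_assoc, ← add_smul, add_comm s]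

lemma lineFiber_preimage_shear (hB : IsLineInvariant v B) (x : F) :
    lineFiber v (shear v B ⁻¹' S) x = (B x + ·) ⁻¹' lineFiber v S x := by
  ext s
  simp only [lineFiber, mem_ofPred_eq, mem_preimage, shear, hB x, add_assoc, ← add_smul,
    add_comm s]

lemma lineCylinder_image_shear (hB : IsLineInvariant v B) :
    lineCylinder v (shear v B '' S) = lineCylinder v S := by
  ext x
  simp only [lineCylinder, mem_ofPred_eq, lineFiber_image_shear hB, add_nonempty,
    singleton_nonempty, true_and]

lemma shear_mem_image_shear_iff {B' : F → ℝ} (hB : IsLineInvariant v B) {x : F}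
    (hx : x ∈ lineCylinder v S → B' x = B x) : shear v B' x ∈ shear v B '' S ↔ x ∈ S := by
  by_cases hcyl : x ∈ lineCylinder v S
  · have heq : shear v B' x = shear v B x := by simp only [shear, hx hcyl]
    rw [heq, mem_image_shear_iff hB, shear_neg_shear hB]
  · refine iff_of_false (fun hmem => hcyl ?_) fun hmem => hcyl (subset_lineCylinder v S hmem)
    have hmem' := subset_lineCylinder v _ hmem
    rw [lineCylinder_image_shear hB] at hmem'
    exact (isLineInvariant_mem_lineCylinder v S x (B' x)).to_iff.1 hmem'

end Algebra

section Convex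

variable [NormedAddCommGroup F] [NormedSpace ℝ F] {v : F} {B : F → ℝ} {K : Set F}

lemma convexOn_sInf_lineFiber_add (hv : v ≠ 0) (hK : Bornology.IsBounded K)
    (hB : IsLineInvariant v B) (hconv : Convex ℝ (shear v B '' K)) :
    ConvexOn ℝ (lineCylinder v K) fun x => sInf (lineFiber v K x) + B x := by
  have hbdd (x : F) : BddBelow (lineFiber v K x) := (isBounded_lineFiber hv hK x).bddBelow
  have hbdd' (x : F) : BddBelow (lineFiber v (shear v B '' K) x) :=
    lineFiber_image_shear hB x ▸ bddBelow_singleton.add (hbdd x)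
  have henv := convexOn_sInf_lineFiber hconv hbdd'
  rw [lineCylinder_image_shear hB] at henv
  refine henv.congr fun x hx => ?_
  change sInf (lineFiber v (shear v B '' K) x) = _
  rw [lineFiber_image_shear hB, csInf_add (singleton_nonempty _) bddBelow_singleton hx (hbdd x),
    csInf_singleton, add_comm]

variable [FiniteDimensional ℝ F]

-- `B` is a difference of two convex functions: the lower envelopes of the sheared body and of `K`.
lemma continuousOn_interior_lineCylinder_of_convex_image_shear (hv : v ≠ 0)
    (hKb : Bornology.IsBounded K) (hK : Convex ℝ K) (hB : IsLineInvariant v B)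
    (hconv : Convex ℝ (shear v B '' K)) : ContinuousOn B (interior (lineCylinder v K)) := by
  have henv := convexOn_sInf_lineFiber hK fun x => (isBounded_lineFiber hv hKb x).bddBelow
  have hsum := convexOn_sInf_lineFiber_add hv hKb hB hconv
  refine (hsum.continuousOn_interior.sub henv.continuousOn_interior).congr fun x _ => ?_
  simp

-- The lower envelope of `K` is nonpositive on `K`, so `B` dominates a convex function there.
lemma bddBelow_image_of_convex_image_shear (hv : v ≠ 0) (hKb : Bornology.IsBounded K)
    (hK : Convex ℝ K) (hKi : (interior K).Nonempty) (hB : IsLineInvariant v B)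
    (hconv : Convex ℝ (shear v B '' K)) : BddBelow (B '' K) := by
  obtain ⟨m, hm⟩ := bddBelow_image_of_convexOn hKb hKi
    ((convexOn_sInf_lineFiber_add hv hKb hB hconv).subset (subset_lineCylinder v K) hK)
  refine ⟨m, ?_⟩
  rintro _ ⟨x, hx, rfl⟩
  have hle : m ≤ sInf (lineFiber v K x) + B x := hm (mem_image_of_mem _ hx)
  have hinf : sInf (lineFiber v K x) ≤ 0 :=
    csInf_le (isBounded_lineFiber hv hKb x).bddBelow (by simpa [lineFiber] using hx)
  linarith

lemma exists_abs_le_of_convex_image_shear (hv : v ≠ 0) (hKb : Bornology.IsBounded K)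
    (hK : Convex ℝ K) (hKi : (interior K).Nonempty) (hB : IsLineInvariant v B)
    (hconv : Convex ℝ (shear v B '' K)) : ∃ C, ∀ x ∈ lineCylinder v K, |B x| ≤ C := by
  obtain ⟨m, hm⟩ := bddBelow_image_of_convex_image_shear hv hKb hK hKi hB hconv
  -- Reversing the direction turns the lower bound into an upper bound.
  obtain ⟨m', hm'⟩ := bddBelow_image_of_convex_image_shear (neg_ne_zero.2 hv) hKb hK hKi
    (isLineInvariant_neg_iff.2 hB.neg) (shear_neg_neg v B ▸ hconv)
  refine ⟨max (-m) (-m'), fun x ⟨s, hs⟩ => ?_⟩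
  have hlower : m ≤ B (x + s • v) := hm (mem_image_of_mem _ hs)
  have hupper : m' ≤ -B (x + s • v) := hm' (mem_image_of_mem (-B) hs)
  rw [hB] at hlower hupper
  exact abs_le.2 ⟨by linarith [le_max_left (-m) (-m')], by linarith [le_max_right (-m) (-m')]⟩

lemma exists_measurable_isLineInvariant_eqOn [MeasurableSpace F] [BorelSpace F] (hv : v ≠ 0)
    (hKb : Bornology.IsBounded K) (hK : Convex ℝ K) (hKi : (interior K).Nonempty)
    (hB : IsLineInvariant v B) (hconv : Convex ℝ (shear v B '' K)) :
    ∃ B' : F → ℝ, Measurable B' ∧ IsLineInvariant v B' ∧ (∃ C, ∀ x, |B' x| ≤ C) ∧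
      EqOn B' B (interior (lineCylinder v K)) := by
  classical
  set U := interior (lineCylinder v K)
  have hcont : ContinuousOn B U :=
    continuousOn_interior_lineCylinder_of_convex_image_shear hv hKb hK hB hconv
  obtain ⟨C, hC⟩ := exists_abs_le_of_convex_image_shear hv hKb hK hKi hB hconv
  refine ⟨U.piecewise B 0,
    hcont.measurable_piecewise continuousOn_const isOpen_interior.measurableSet, fun x s => ?_,
    ⟨max C 0, fun x => ?_⟩, U.piecewise_eqOn B 0⟩
  · have hU : x + s • v ∈ U ↔ x ∈ U :=
      (isLineInvariant_mem_interior (isLineInvariant_mem_lineCylinder v K) x s).to_iff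
    simp only [piecewise, hU, hB x, Pi.zero_apply]
  · by_cases hx : x ∈ U
    · simpa [hx] using Or.inl (hC x (interior_subset hx))
    · simp [hx]

end Convex

section Measure

variable [NormedAddCommGroup F] [NormedSpace ℝ F] [MeasurableSpace F] [BorelSpace F]
  {v : F} {B : F → ℝ}

section SecondCountable

variable [SecondCountableTopology F]

lemma measurable_shear (v : F) (hB : Measurable B) : Measurable (shear v B) :=
  measurable_id.add (hB.smul_const v)

lemma measurePreserving_shear (ν : Measure F) [SFinite ν] [ν.IsAddRightInvariant] (hv : v ≠ 0)
    (hB : IsLineInvariant v B) (hBm : Measurable B) : MeasurePreserving (shear v B) ν ν := by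
  obtain ⟨ℓ, hℓ⟩ := SeparatingDual.exists_eq_one (R := ℝ) hv
  refine ⟨measurable_shear v hBm, Measure.ext fun S hS => ?_⟩
  rw [Measure.map_apply (measurable_shear v hBm) hS,
    measure_eq_setLIntegral_volume_lineFiber ν hℓ (measurable_shear v hBm hS),
    measure_eq_setLIntegral_volume_lineFiber ν hℓ hS]
  simp only [lineFiber_preimage_shear hB, measure_preimage_add]

/-- A measurable shear along lines of direction `v` as a measurable bijection, with inverse the
shear of opposite amplitude. -/
def shearEquiv (hB : IsLineInvariant v B) (hBm : Measurable B) : F ≃ᵐ F where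
  toFun := shear v B
  invFun := shear v (-B)
  left_inv := shear_neg_shear hB
  right_inv := shear_shear_neg hB
  measurable_toFun := measurable_shear v hBm
  measurable_invFun := measurable_shear v hBm.neg

end SecondCountable

lemma preimage_shear_image_shear_ae_eq [FiniteDimensional ℝ F] (ν : Measure F)
    [ν.IsAddHaarMeasure] {B' : F → ℝ} {K : Set F} (hK : Convex ℝ K) (hB : IsLineInvariant v B)
    (heq : EqOn B' B (interior (lineCylinder v K))) :
    shear v B' ⁻¹' (shear v B '' K) =ᵐ[ν] K := by
  have hfrontier : ∀ᵐ x ∂ν, x ∉ frontier (lineCylinder v K) :=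
    measure_eq_zero_iff_ae_notMem.1 ((convex_lineCylinder v hK).addHaar_frontier ν)
  refine Filter.eventuallyEq_set.2 (hfrontier.mono fun x hx => ?_)
  refine shear_mem_image_shear_iff hB fun hcyl => heq ?_
  by_contra hint
  exact hx ⟨subset_closure hcyl, hint⟩

end Measure

end Shears

section RandomPolytopes

lemma convexOn_measureReal_symmHull_shear {ι F : Type*} [Finite ι] [NormedAddCommGroup F]
    [NormedSpace ℝ F] [MeasurableSpace F] [BorelSpace F] [SecondCountableTopology F]
    (ν : Measure F) [SFinite ν] [ν.IsAddRightInvariant] [IsFiniteMeasureOnCompacts ν] {v : F}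
    (hv : v ≠ 0) (B : F → ℝ) (y : ι → F) :
    ConvexOn ℝ univ fun t : ℝ => ν.real (symmHull fun i => shear v (t • B) (y i)) := by
  have hshadow (t : ℝ) : symmHull (fun i => shear v (t • B) (y i)) =
      shadowSystem v (symmHull fun i => (y i, B (y i))) t :=
    symmHull_add_smul_eq_shadowSystem v y (fun i => B (y i)) t
  simp only [hshadow]
  exact convexOn_measureReal_shadowSystem ν hv (isCompact_symmHull _) (convex_convexHull ℝ _)

lemma measureReal_symmHull_shear_le {ι F : Type*} [NormedAddCommGroup F] [NormedSpace ℝ F]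
    [ProperSpace F] [MeasurableSpace F] (ν : Measure F) [IsFiniteMeasureOnCompacts ν] {v : F}
    {B : F → ℝ} {C R : ℝ} (hC : ∀ x, |B x| ≤ C) {y : ι → F} (hy : ∀ i, ‖y i‖ ≤ R) :
    ν.real (symmHull fun i => shear v B (y i)) ≤ ν.real (Metric.closedBall 0 (R + C * ‖v‖)) := by
  refine measureReal_mono (symmHull_subset_closedBall fun i => ?_) measure_closedBall_lt_top.ne
  calc ‖shear v B (y i)‖ ≤ ‖y i‖ + |B (y i)| * ‖v‖ :=
        (norm_add_le _ _).trans_eq (by rw [norm_smul, Real.norm_eq_abs])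
    _ ≤ R + C * ‖v‖ := by gcongr; exacts [hy i, hC _]

variable {ι : Type*} [Fintype ι]

lemma setIntegral_pi_eq_setIntegral_comp {α γ G : Type*} [MeasurableSpace α] [MeasurableSpace γ]
    [NormedAddCommGroup G] [NormedSpace ℝ G] {μ : Measure α} [SigmaFinite μ] {ν : Measure γ}
    [SigmaFinite ν] (e : α ≃ᵐ γ) (he : MeasurePreserving e μ ν) {S : Set γ} {K : Set α}
    (hS : e ⁻¹' S =ᵐ[μ] K) (Φ : (ι → γ) → G) :
    ∫ x in {x | ∀ i, x i ∈ S}, Φ x ∂Measure.pi (fun _ : ι => ν) =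
      ∫ y in {y | ∀ i, y i ∈ K}, Φ (fun i => e (y i)) ∂Measure.pi (fun _ : ι => μ) := by
  have hpi : MeasurePreserving (MeasurableEquiv.piCongrRight fun _ : ι => e)
      (Measure.pi fun _ => μ) (Measure.pi fun _ => ν) :=
    measurePreserving_pi _ _ fun _ => he
  have hae : {y : ι → α | ∀ i, y i ∈ e ⁻¹' S} =ᵐ[Measure.pi fun _ => μ] {y | ∀ i, y i ∈ K} := by
    simpa only [pi, mem_univ, true_imp_iff] using Measure.ae_eq_set_pi fun i (_ : i ∈ univ) => hS
  rw [← setIntegral_congr_set hae]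
  exact (hpi.setIntegral_preimage_emb (MeasurableEquiv.measurableEmbedding _) _ _).symm

variable {F : Type*} [NormedAddCommGroup F] [NormedSpace ℝ F] [FiniteDimensional ℝ F]
  [MeasurableSpace F] [BorelSpace F] (ν : Measure F) [ν.IsAddHaarMeasure]
  {v : F} {B : F → ℝ} {K : Set F}

lemma integrableOn_measureReal_symmHull_shear_rpow (hK : IsCompact K) (hBm : Measurable B)
    {C : ℝ} (hC : ∀ x, |B x| ≤ C) {k p : ℝ} (hk : 0 ≤ k) (hp : 0 ≤ p) :
    IntegrableOn (fun y : ι → F => (ν.real (symmHull fun i => shear v B (y i)) / k) ^ p)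
      {y | ∀ i, y i ∈ K} (Measure.pi fun _ => ν) := by
  obtain ⟨R, hR⟩ := hK.isBounded.exists_norm_le
  have hKpi : IsCompact {y : ι → F | ∀ i, y i ∈ K} := by
    simpa only [pi, mem_univ, true_imp_iff] using isCompact_univ_pi fun _ : ι => hK
  have hshear : Measurable fun (y : ι → F) (i : ι) => shear v B (y i) :=
    measurable_pi_iff.2 fun i => (measurable_shear v hBm).comp (measurable_pi_apply i)
  have hmeas : Measurable fun y : ι → F => ν.real (symmHull fun i => shear v B (y i)) :=
    ((measurable_measure_symmHull ν).comp hshear).ennreal_toReal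
  refine Measure.integrableOn_of_bounded hKpi.measure_ne_top
    (M := (ν.real (Metric.closedBall 0 (R + C * ‖v‖)) / k) ^ p)
    ((hmeas.div_const k).pow_const p).aestronglyMeasurable
    ((ae_restrict_iff' hKpi.measurableSet).2 (.of_forall fun y hy => ?_))
  rw [Real.norm_of_nonneg (by positivity)]
  have hle := measureReal_symmHull_shear_le ν (v := v) hC fun i => hR _ (hy i)
  exact Real.rpow_le_rpow (by positivity) (div_le_div_of_nonneg_right hle hk) hp

lemma convexOn_setIntegral_measureReal_symmHull_shear_rpow (hv : v ≠ 0) (hK : IsCompact K)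
    (hBm : Measurable B) {C : ℝ} (hC : ∀ x, |B x| ≤ C) {k p : ℝ} (hk : 0 ≤ k) (hp : 1 ≤ p) :
    ConvexOn ℝ univ fun t : ℝ => ∫ y : ι → F in {y | ∀ i, y i ∈ K},
      (ν.real (symmHull fun i => shear v (t • B) (y i)) / k) ^ p ∂Measure.pi fun _ => ν := by
  refine convexOn_integral convex_univ (fun y => convexOn_div_rpow
    (convexOn_measureReal_symmHull_shear ν hv B y) (fun t _ => measureReal_nonneg) hk hp)
    fun t _ => ?_
  have htC (x : F) : |(t • B) x| ≤ |t| * C := by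
    rw [Pi.smul_apply, smul_eq_mul, abs_mul]
    gcongr
    exact hC x
  exact integrableOn_measureReal_symmHull_shear_rpow ν hK (hBm.const_smul t) htC hk (by linarith)

end RandomPolytopes

section Movements

lemma isLineInvariant_projPerp (v : E) : IsLineInvariant v (projPerp v) := fun x s => by
  rcases eq_or_ne v 0 with rfl | hv
  · simp
  · have hvv : ⟪v, v⟫ ≠ 0 := inner_self_ne_zero.2 hv
    rw [projPerp, projPerp, inner_add_left, real_inner_smul_left, add_div,
      mul_div_cancel_right₀ _ hvv]
    module

lemma isLineInvariant_comp_projPerp (v : E) (β : E → ℝ) : IsLineInvariant v (β ∘ projPerp v) :=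
  fun x s => congrArg β (isLineInvariant_projPerp v x s)

lemma RSFamily_eq_image_shear (K : Set E) (v : E) (β : E → ℝ) (t : ℝ) :
    RSFamily K v β t = shear v (t • (β ∘ projPerp v)) '' K := rfl

lemma exists_measurable_speed [FiniteDimensional ℝ E] [MeasurableSpace E] [BorelSpace E] {v : E}
    {K : Set E} (hKb : Bornology.IsBounded K) (hK : Convex ℝ K) (hKi : (interior K).Nonempty)
    (hv : v ≠ 0) {β : E → ℝ} {t₀ : ℝ} (ht₀ : t₀ ≠ 0) (hmove : Convex ℝ (RSFamily K v β t₀)) :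
    ∃ B : E → ℝ, Measurable B ∧ IsLineInvariant v B ∧
      (∃ C, ∀ x, |B x| ≤ C) ∧ EqOn B (β ∘ projPerp v) (interior (lineCylinder v K)) := by
  obtain ⟨B, hBm, hB, ⟨C, hC⟩, heq⟩ := exists_measurable_isLineInvariant_eqOn hv hKb hK hKi
    ((isLineInvariant_comp_projPerp v β).smul t₀) hmove
  refine ⟨t₀⁻¹ • B, hBm.const_smul _, hB.smul _, ⟨|t₀⁻¹| * C, fun x => ?_⟩, fun x hx => ?_⟩
  · rw [Pi.smul_apply, smul_eq_mul, abs_mul]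
    gcongr
    exact hC x
  · rw [Pi.smul_apply, heq hx, Pi.smul_apply, inv_smul_smul₀ ht₀]

variable {n : ℕ} {K : Set (EuclideanSpace ℝ (Fin n))} {v : EuclideanSpace ℝ (Fin n)}

-- The change of variables has to be made with a measurable modification of the speed.
lemma momentV_image_shear (N : ℕ) (p : ℝ) (hv : v ≠ 0) (hK : Convex ℝ K)
    {B B' : EuclideanSpace ℝ (Fin n) → ℝ} (hB : IsLineInvariant v B) (hB' : IsLineInvariant v B')
    (hBm' : Measurable B') (heq : EqOn B' B (interior (lineCylinder v K))) :
    momentV n N (shear v B '' K) p =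
      (∫ y : Fin N → EuclideanSpace ℝ (Fin n) in {y | ∀ i, y i ∈ K},
        (volume.real (symmHull fun i => shear v B' (y i)) / volume.real K) ^ p) /
          volume.real K ^ N := by
  have hae : shearEquiv hB' hBm' ⁻¹' (shear v B '' K) =ᵐ[volume] K :=
    preimage_shear_image_shear_ae_eq volume hK hB heq
  have hmp : MeasurePreserving (shearEquiv hB' hBm') volume volume :=
    measurePreserving_shear volume hv hB' hBm'
  have hvol : volume.real (shear v B '' K) = volume.real K :=
    congrArg ENNReal.toReal ((hmp.measure_preimage_equiv _).symm.trans (measure_congr hae))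
  change (∫ x : Fin N → EuclideanSpace ℝ (Fin n) in {x | ∀ i, x i ∈ shear v B '' K},
    (volume.real (symmHull x) / volume.real (shear v B '' K)) ^ p) /
      volume.real (shear v B '' K) ^ N = _
  rw [hvol]
  exact congrArg (· / _) (setIntegral_pi_eq_setIntegral_comp _ hmp hae _)

lemma convexOn_univ_momentV_RSFamily (hKc : IsCompact K) (hK : Convex ℝ K)
    (hKi : (interior K).Nonempty) (hv : v ≠ 0) {β : EuclideanSpace ℝ (Fin n) → ℝ} {t₀ : ℝ}
    (ht₀ : t₀ ≠ 0) (hmove : Convex ℝ (RSFamily K v β t₀)) {p : ℝ} (hp : 1 ≤ p) (N : ℕ) :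
    ConvexOn ℝ univ fun t => momentV n N (RSFamily K v β t) p := by
  obtain ⟨B, hBm, hB, ⟨C, hC⟩, heq⟩ :=
    exists_measurable_speed hKc.isBounded hK hKi hv ht₀ hmove
  have hmoment (t : ℝ) : momentV n N (RSFamily K v β t) p = (volume.real K ^ N)⁻¹ •
      ∫ y : Fin N → EuclideanSpace ℝ (Fin n) in {y | ∀ i, y i ∈ K},
        (volume.real (symmHull fun i => shear v (t • B) (y i)) / volume.real K) ^ p := by
    have heq_t : EqOn (t • B) (t • (β ∘ projPerp v)) (interior (lineCylinder v K)) :=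
      fun x hx => congrArg (t • ·) (heq hx)
    rw [RSFamily_eq_image_shear, momentV_image_shear N p hv hK
      ((isLineInvariant_comp_projPerp v β).smul t) (hB.smul t) (hBm.const_smul t) heq_t,
      div_eq_inv_mul, smul_eq_mul]
  simp only [hmoment]
  exact (convexOn_setIntegral_measureReal_symmHull_shear_rpow volume hv hKc hBm hC
    measureReal_nonneg hp).smul (by positivity)

theorem momentV_convexOn_of_SRSMovement_general (hKc : IsCompact K) (hK : Convex ℝ K)
    (hKi : (interior K).Nonempty) (hv : v ≠ 0) (β : EuclideanSpace ℝ (Fin n) → ℝ)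
    {I : Set ℝ} (hI : Convex ℝ I) (hmove : ∀ t ∈ I, Convex ℝ (RSFamily K v β t))
    {p : ℝ} (hp : 1 ≤ p) (N : ℕ) :
    ConvexOn ℝ I fun t => momentV n N (RSFamily K v β t) p := by
  by_cases hzero : I ⊆ {0}
  · exact convexOn_of_subsingleton (subsingleton_singleton.anti hzero) _
  · obtain ⟨t₀, ht₀I, ht₀⟩ := not_subset.1 hzero
    exact (convexOn_univ_momentV_RSFamily hKc hK hKi hv ht₀ (hmove t₀ ht₀I) hp N).subset
      (subset_univ I) hI

end Movements

/-- Let `K_t`, `t ∈ I`, be an SRS-movement of a symmetric convex body `K ⊆ ℝⁿ` (with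
direction `v ≠ 0` and odd speed function `β`, each `K_t` convex).  Then for every real
`p ≥ 1` and every integer `N ≥ n`, the function `t ↦ 𝔼 V_{K_t, N}^p` is convex on `I`. -/
theorem momentV_convexOn_of_SRSMovement
    {n : ℕ} (K : Set (EuclideanSpace ℝ (Fin n))) (hK : IsSymConvexBody K)
    (v : EuclideanSpace ℝ (Fin n)) (hv : v ≠ 0) (β : EuclideanSpace ℝ (Fin n) → ℝ)
    (hβodd : ∀ x ∈ projPerp v '' K, β (-x) = -β x)
    (I : Set ℝ) (hI : Convex ℝ I) (h0I : (0 : ℝ) ∈ I)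
    (hmove : ∀ t ∈ I, Convex ℝ (RSFamily K v β t))
    (p : ℝ) (hp : 1 ≤ p) (N : ℕ) (hN : n ≤ N) :
    ConvexOn ℝ I (fun t => momentV n N (RSFamily K v β t) p) := by
  obtain ⟨hKc, hKconv, hKi, -⟩ := hK
  exact momentV_convexOn_of_SRSMovement_general hKc hKconv hKi hv β hI hmove hp N
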